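/- For every sufficiently large positive integer N, the equation x² + y² = z² + t² has a nontrivial solution in positive integers (i.e., one with {x, y} ≠ {z, t}) satisfying N ≤ x, y, z, t ≤ N + √(8N) + 5·N^{1/4} (as reals). -/

import Mathlib

/-!
For natural numbers `a` and `b`, put `n = 2ab - 1`. The numbers `n + 2(a + b + 1)` and `n` have the
same sum of squares as `n + 2(a + 1)` and `n + 2(b + 1)`, and all four lie between `n` and
`2ab + 2(a + b) + 1`. It remains to choose `a` and `b` so that `2ab` barely exceeds `N` while
`a + b` is as small as possible. Take `a = s + j` and `b = s - j`, where `s ≈ √(N/2)` is least with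
`2s² > N` and `j` is the largest integer for which `2(s² - j²)` still exceeds `N`. Then
`2(a + b) = 4s` contributes about `√(8N)`. As `s²` exceeds `N/2` by at most about `2√(N/2)`,
we have `j ≤ (2N)^(1/4)`, and going from `j` to `j + 1` changes `2(s² - j²)` by `4j + 2`; so `2ab`
exceeds `N` by at most about `4(2N)^(1/4)`, and `4 · 2^(1/4) < 5`.
-/

/-- A nontrivial solution of `x² + y² = z² + t²`: the unordered pairs of the two sides differ. They
are compared as finsets, so the order of `x` and `y`, or of `z` and `t`, is irrelevant. -/
def IsNontrivialSolution (x y z t : ℕ) : Prop :=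
  x ^ 2 + y ^ 2 = z ^ 2 + t ^ 2 ∧ ({x, y} : Finset ℕ) ≠ {z, t}

theorem sq_add_sq_eq_sq_add_sq_of_two_mul_mul_eq {R : Type*} [CommSemiring R] {a b n : R}
    (h : 2 * (a * b) = n + 1) :
    (n + 2 * (a + b + 1)) ^ 2 + n ^ 2 = (n + 2 * (a + 1)) ^ 2 + (n + 2 * (b + 1)) ^ 2 := by
  calc (n + 2 * (a + b + 1)) ^ 2 + n ^ 2
      = 2 * n ^ 2 + 4 * n * (a + b + 1) + 4 * (a ^ 2 + b ^ 2 + 2 * a + 2 * b + 1)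
          + 4 * (2 * (a * b)) := by ring
    _ = 2 * n ^ 2 + 4 * n * (a + b + 1) + 4 * (a ^ 2 + b ^ 2 + 2 * a + 2 * b + 1)
          + 4 * (n + 1) := by rw [h]
    _ = (n + 2 * (a + 1)) ^ 2 + (n + 2 * (b + 1)) ^ 2 := by ring

theorem isNontrivialSolution_of_two_mul_mul_eq {a b n : ℕ} (h : 2 * (a * b) = n + 1) :
    IsNontrivialSolution (n + 2 * (a + b + 1)) n (n + 2 * (a + 1)) (n + 2 * (b + 1)) := by
  refine ⟨sq_add_sq_eq_sq_add_sq_of_two_mul_mul_eq h, fun heq => ?_⟩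
  have ha : a ≠ 0 := by rintro rfl; simp at h
  have hb : b ≠ 0 := by rintro rfl; simp at h
  have hmem : n + 2 * (a + b + 1) ∈ ({n + 2 * (a + 1), n + 2 * (b + 1)} : Finset ℕ) :=
    heq ▸ Finset.mem_insert_self _ _
  simp only [Finset.mem_insert, Finset.mem_singleton] at hmem
  omega

theorem exists_lt_mul_and_mul_le_add_natSqrt (n : ℕ) :
    ∃ a b : ℕ, a + b = 2 * (n.sqrt + 1) ∧ n < a * b ∧
      a * b ≤ n + 1 + 2 * (2 * n.sqrt).sqrt := by
  set s := n.sqrt + 1 with hs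
  have hs_lower : n + 1 ≤ s ^ 2 := Nat.lt_succ_sqrt' n
  have hs_upper : s ^ 2 ≤ n + 1 + 2 * n.sqrt := by
    rw [hs, add_sq]
    linarith [Nat.sqrt_le' n]
  set j := (s ^ 2 - (n + 1)).sqrt
  have hj_sq : j ^ 2 ≤ s ^ 2 - (n + 1) := Nat.sqrt_le' _
  have hj_max : s ^ 2 - (n + 1) ≤ j ^ 2 + 2 * j := by
    linarith [Nat.sqrt_le_add (s ^ 2 - (n + 1)), sq j]
  have hj_le : j ≤ (2 * n.sqrt).sqrt := Nat.sqrt_le_sqrt (by omega)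
  have hjs : j ≤ s := (Nat.pow_le_pow_iff_left two_ne_zero).1 (by omega)
  refine ⟨s + j, s - j, by omega, ?_, ?_⟩ <;> rw [← Nat.sq_sub_sq] <;> omega

theorem exists_isNontrivialSolution_mem_Icc (N : ℕ) :
    ∃ x y z t : ℕ, IsNontrivialSolution x y z t ∧ ∀ w ∈ ({x, y, z, t} : Finset ℕ),
      w ∈ Finset.Icc N (N + 4 * (N / 2).sqrt + 4 * (2 * (N / 2).sqrt).sqrt + 7) := by
  obtain ⟨a, b, hadd, hlt, hle⟩ := exists_lt_mul_and_mul_le_add_natSqrt (N / 2)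
  obtain ⟨n, hn⟩ : ∃ n, 2 * (a * b) = n + 1 := Nat.exists_eq_add_one.2 (by omega)
  refine ⟨_, _, _, _, isNontrivialSolution_of_two_mul_mul_eq hn, fun w hw => ?_⟩
  simp only [Finset.mem_insert, Finset.mem_singleton] at hw
  rw [Finset.mem_Icc]
  omega

theorem four_mul_natSqrt_half_le_sqrt (N : ℕ) : 4 * ((N / 2).sqrt : ℝ) ≤ √(8 * N) := by
  refine Real.le_sqrt_of_sq_le ?_
  have hsq : 2 * (N / 2).sqrt ^ 2 ≤ N := by have := Nat.sqrt_le' (N / 2); omega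
  have hsq_real : 2 * ((N / 2).sqrt : ℝ) ^ 2 ≤ N := mod_cast hsq
  linarith [mul_pow (4 : ℝ) (N / 2).sqrt 2]

theorem natSqrt_two_mul_natSqrt_half_pow_four_le (N : ℕ) :
    (2 * (N / 2).sqrt).sqrt ^ 4 ≤ 2 * N := by
  calc (2 * (N / 2).sqrt).sqrt ^ 4 = ((2 * (N / 2).sqrt).sqrt ^ 2) ^ 2 := by ring
    _ ≤ (2 * (N / 2).sqrt) ^ 2 := Nat.pow_le_pow_left (Nat.sqrt_le' _) 2
    _ = 4 * (N / 2).sqrt ^ 2 := by ring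
    _ ≤ 4 * (N / 2) := Nat.mul_le_mul_left 4 (Nat.sqrt_le' _)
    _ ≤ 2 * N := by omega

theorem four_mul_add_seven_le_five_mul {k q : ℝ} (hq : 30 ≤ q) (hk : k ^ 4 ≤ 2 * q ^ 4) :
    4 * k + 7 ≤ 5 * q := by
  -- `1.19` is slightly larger than the fourth root of `2`.
  have hkq : k ≤ 1.19 * q := by
    refine le_of_pow_le_pow_left₀ four_ne_zero (by positivity) (hk.trans ?_)
    rw [mul_pow]
    gcongr
    norm_num
  linarith

theorem cast_add_natSqrt_bound_le {N : ℕ} (hN : 30 ^ 4 ≤ N) :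
    ((N + 4 * (N / 2).sqrt + 4 * (2 * (N / 2).sqrt).sqrt + 7 : ℕ) : ℝ) ≤
      N + √(8 * N) + 5 * (N : ℝ) ^ ((1 : ℝ) / 4) := by
  set q := (N : ℝ) ^ ((1 : ℝ) / 4)
  have hq_pow : q ^ 4 = N := by
    simpa [q] using Real.rpow_inv_natCast_pow (Nat.cast_nonneg' N) four_ne_zero
  have hq : 30 ≤ q := by
    refine le_of_pow_le_pow_left₀ four_ne_zero (by positivity) ?_
    rw [hq_pow]
    exact_mod_cast hN
  have hj : ((2 * (N / 2).sqrt).sqrt : ℝ) ^ 4 ≤ 2 * q ^ 4 := by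
    rw [hq_pow]
    exact_mod_cast natSqrt_two_mul_natSqrt_half_pow_four_le N
  push_cast
  linarith [four_mul_natSqrt_half_le_sqrt N, four_mul_add_seven_le_five_mul hq hj]

/-- For every sufficiently large positive integer `N`, the equation
`x² + y² = z² + t²` has a nontrivial solution with
`N ≤ x, y, z, t ≤ N + √(8N) + 5·N^(1/4)`. -/
theorem squares_nontrivial_solution_short_interval :
    ∃ N₀ : ℕ, ∀ N : ℕ, N₀ ≤ N →
      ∃ x y z t : ℕ, 0 < x ∧ 0 < y ∧ 0 < z ∧ 0 < t ∧
        N ≤ x ∧ N ≤ y ∧ N ≤ z ∧ N ≤ t ∧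
        (x : ℝ) ≤ N + Real.sqrt (8 * N) + 5 * (N : ℝ) ^ ((1 : ℝ) / 4) ∧
        (y : ℝ) ≤ N + Real.sqrt (8 * N) + 5 * (N : ℝ) ^ ((1 : ℝ) / 4) ∧
        (z : ℝ) ≤ N + Real.sqrt (8 * N) + 5 * (N : ℝ) ^ ((1 : ℝ) / 4) ∧
        (t : ℝ) ≤ N + Real.sqrt (8 * N) + 5 * (N : ℝ) ^ ((1 : ℝ) / 4) ∧
        x ^ 2 + y ^ 2 = z ^ 2 + t ^ 2 ∧
        ({x, y} : Finset ℕ) ≠ {z, t} := by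
  refine ⟨30 ^ 4, fun N hN => ?_⟩
  obtain ⟨x, y, z, t, ⟨hsq, hne⟩, hIcc⟩ := exists_isNontrivialSolution_mem_Icc N
  have hlower : ∀ w ∈ ({x, y, z, t} : Finset ℕ), N ≤ w :=
    fun w hw => (Finset.mem_Icc.1 (hIcc w hw)).1
  have hpos : ∀ w ∈ ({x, y, z, t} : Finset ℕ), 0 < w :=
    fun w hw => (Nat.lt_of_lt_of_le (by norm_num) hN).trans_le (hlower w hw)
  have hupper : ∀ w ∈ ({x, y, z, t} : Finset ℕ),
      (w : ℝ) ≤ N + √(8 * N) + 5 * (N : ℝ) ^ ((1 : ℝ) / 4) :=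
    fun w hw =>
      (Nat.cast_le.2 (Finset.mem_Icc.1 (hIcc w hw)).2).trans (cast_add_natSqrt_bound_le hN)
  simp only [Finset.forall_mem_insert, Finset.mem_singleton, forall_eq] at hlower hpos hupper
  obtain ⟨hx, hy, hz, ht⟩ := hlower
  obtain ⟨hx0, hy0, hz0, ht0⟩ := hpos
  obtain ⟨hxu, hyu, hzu, htu⟩ := hupper
  exact ⟨x, y, z, t, hx0, hy0, hz0, ht0, hx, hy, hz, ht, hxu, hyu, hzu, htu, hsq, hne⟩
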